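/- arXiv:1411.2584 — 2 statements merged into one kernel-verified Lean document; each statement's English description precedes it below -/
import Mathlib

section
/- The univariate Fejér kernel F(x) := (1/2)·sinc²(x/2), where sinc(x) = sin(πx)/(πx) for x ≠ 0 and sinc(0) = 1, satisfies the partition-of-unity condition Σ_{k∈ℤ} F(u − k) = 1 for every u ∈ ℝ. -/
open MeasureTheory Filter

noncomputable section

/-- The sinc function: `sinc x = sin(πx)/(πx)` for `x ≠ 0`, `sinc 0 = 1`. -/
def sinc (x : ℝ) : ℝ := if x = 0 then 1 else Real.sin (Real.pi * x) / (Real.pi * x)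

/-- The Fejér kernel `F(x) = (1/2)·sinc²(x/2)`. -/
def Fejer (x : ℝ) : ℝ := (1 / 2) * sinc (x / 2) ^ 2

/-- The Fourier transform `χ̂(v) = ∫_ℝ χ(u)·e^{−ivu} du`. -/
def fourierT (χ : ℝ → ℝ) (v : ℝ) : ℂ :=
  ∫ u : ℝ, (χ u : ℂ) * Complex.exp (-(Complex.I * (v : ℂ) * (u : ℂ)))

lemma sinc_eq_integral (x : ℝ) :
    ∫ t in (-(1/2) : ℝ)..(1/2), Complex.exp ((2 * Real.pi * x * Complex.I) * t) = (sinc x : ℂ) := by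
  unfold sinc
  split_ifs with h
  · subst h
    simp
    norm_num
  · have hp : (Real.pi : ℂ) ≠ 0 := by exact_mod_cast Real.pi_ne_zero
    have hx : (x : ℂ) ≠ 0 := by exact_mod_cast h
    have hc : (2 * Real.pi * x * Complex.I : ℂ) ≠ 0 := by simp [hp, hx]
    rw [integral_exp_mul_complex hc]
    push_cast
    rw [Complex.sin]
    rw [show (2 * Real.pi * x * Complex.I : ℂ) * (1/2) = Real.pi * x * Complex.I by ring,
      show (2 * Real.pi * x * Complex.I : ℂ) * (-(1/2)) = -(Real.pi * x) * Complex.I by ring]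
    field_simp
    rw [Complex.I_sq]
    ring

lemma integral_ind {E : Type*} [NormedAddCommGroup E] [NormedSpace ℝ E] (g : ℝ → E) :
    ∫ t in (-1 : ℝ)..1, (Set.Ioc (-(1/2) : ℝ) (1/2)).indicator g t =
      ∫ t in (-(1/2) : ℝ)..(1/2), g t := by
  rw [intervalIntegral.integral_of_le (by norm_num), intervalIntegral.integral_of_le (by norm_num),
    setIntegral_indicator measurableSet_Ioc, Set.inter_eq_self_of_subset_right]
  exact Set.Ioc_subset_Ioc (by norm_num) (by norm_num)

/-- the test function to which Parseval's identity is applied -/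
def testFun (u : ℝ) : ℝ → ℂ :=
  (Set.Ioc (-(1/2) : ℝ) (1/2)).indicator (fun t => Complex.exp ((Real.pi * u * t : ℝ) * Complex.I))

lemma testFun_memLp (u : ℝ) : MemLp (testFun u) 2 (volume.restrict (Set.Ioc (-1 : ℝ) 1)) := by
  apply MemLp.indicator measurableSet_Ioc
  refine MemLp.of_bound (C := 1) ?_ ?_
  · exact Continuous.aestronglyMeasurable (by fun_prop)
  · filter_upwards with t
    rw [Complex.norm_exp_ofReal_mul_I]

lemma testFun_coeff (u : ℝ) (k : ℤ) :
    fourierCoeffOn (show (-1 : ℝ) < 1 by norm_num) (testFun u) k =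
      ((1 / 2 * sinc ((u - k) / 2) : ℝ) : ℂ) := by
  rw [fourierCoeffOn_eq_integral]
  push_cast
  rw [← sinc_eq_integral, ← integral_ind]
  have : (1 / (1 - -1) : ℝ) = 1 / 2 := by norm_num
  rw [this, Complex.real_smul]
  push_cast
  congr 1
  apply intervalIntegral.integral_congr
  intro t _
  simp only [testFun, Set.indicator]
  split_ifs
  · rw [fourier_coe_apply, smul_eq_mul, ← Complex.exp_add]
    congr 1
    push_cast
    ring
  · simp

/-- The Fejér kernel satisfies the partition of unity
`Σ_{k∈ℤ} F(u − k) = 1` for every `u ∈ ℝ`. -/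
theorem statement12 (u : ℝ) : HasSum (fun k : ℤ => Fejer (u - (k : ℝ))) 1 := by
  have h := hasSum_sq_fourierCoeffOn (show (-1 : ℝ) < 1 by norm_num) (testFun_memLp u)
  have hi : ∫ x in (-1 : ℝ)..1, ‖testFun u x‖ ^ 2 = 1 := by
    have : ∀ x, ‖testFun u x‖ ^ 2 = (Set.Ioc (-(1/2) : ℝ) (1/2)).indicator (fun _ => (1 : ℝ)) x := by
      intro x
      simp only [testFun, Set.indicator]
      split_ifs
      · rw [Complex.norm_exp_ofReal_mul_I]; norm_num
      · simp
    simp_rw [this]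
    rw [integral_ind]
    simp
    norm_num
  rw [hi] at h
  have h2 := h.mul_left 2
  convert h2 using 1
  · rfl
  · funext k
    rw [testFun_coeff, Complex.norm_real, Real.norm_eq_abs, sq_abs, Fejer]
    ring
  · norm_num
end
end

section
/- The Fourier transform of the Fejér kernel F(x) := (1/2)·sinc²(x/2), defined by F̂(v) := ∫_ℝ F(u)·e^{−ivu} du, equals 1 − |v/π| for |v| ≤ π and 0 for |v| > π. -/
open MeasureTheory Filter

noncomputable section

/-- The triangle function. -/
def tri (w : ℝ) : ℝ := max 0 (1 - 2 * |w|)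

lemma tri_cont : Continuous tri := by unfold tri; fun_prop

lemma tri_supp : Function.support tri ⊆ Set.Ioc (-(1 / 2)) (1 / 2) := by
  intro w hw
  by_contra h
  apply hw
  unfold tri
  apply max_eq_left
  by_contra h2
  push Not at h2
  apply h
  have : |w| < 1 / 2 := by linarith
  rw [abs_lt] at this
  exact ⟨by linarith [this.1], by linarith [this.2]⟩

lemma tri_compact : HasCompactSupport tri :=
  HasCompactSupport.of_support_subset_isCompact isCompact_Icc
    (tri_supp.trans Set.Ioc_subset_Icc_self)

lemma tri_int : Integrable (fun w => (tri w : ℂ)) :=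
  (tri_cont.integrable_of_hasCompactSupport tri_compact).ofReal

lemma tri_integral (c : ℂ) :
    ∫ w : ℝ, (tri w : ℂ) * Complex.exp (c * w) =
      (∫ w in (-(1 / 2) : ℝ)..0, (1 + 2 * (w : ℂ)) * Complex.exp (c * w)) +
      ∫ w in (0 : ℝ)..(1 / 2), (1 - 2 * (w : ℂ)) * Complex.exp (c * w) := by
  have hs : Function.support (fun w : ℝ => (tri w : ℂ) * Complex.exp (c * w)) ⊆
      Set.Ioc (-(1 / 2)) (1 / 2) := by
    intro w hw
    apply tri_supp
    intro h
    apply hw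
    simp [h]
  have hc : Continuous (fun w : ℝ => (tri w : ℂ) * Complex.exp (c * w)) := by
    have := tri_cont
    fun_prop
  rw [← intervalIntegral.integral_eq_integral_of_support_subset hs,
    ← intervalIntegral.integral_add_adjacent_intervals
      (hc.intervalIntegrable (-(1 / 2)) 0) (hc.intervalIntegrable 0 (1 / 2))]
  congr 1
  · apply intervalIntegral.integral_congr
    intro w hw
    rw [Set.uIcc_of_le (by norm_num)] at hw
    have : tri w = 1 + 2 * w := by
      unfold tri
      rw [abs_of_nonpos hw.2, max_eq_right] <;> linarith [hw.1]
    simp [this]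
  · apply intervalIntegral.integral_congr
    intro w hw
    rw [Set.uIcc_of_le (by norm_num)] at hw
    have : tri w = 1 - 2 * w := by
      unfold tri
      rw [abs_of_nonneg hw.1, max_eq_right]; linarith [hw.2]
    simp [this]

lemma half_integral (a b : ℝ) (s c : ℂ) (hc : c ≠ 0) :
    ∫ w in a..b, (1 + s * (w : ℂ)) * Complex.exp (c * w) =
      ((1 + s * (b : ℂ)) / c - s / c ^ 2) * Complex.exp (c * b) -
      ((1 + s * (a : ℂ)) / c - s / c ^ 2) * Complex.exp (c * a) := by
  apply intervalIntegral.integral_eq_sub_of_hasDerivAt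
    (f := fun w : ℝ => ((1 + s * (w : ℂ)) / c - s / c ^ 2) * Complex.exp (c * w))
  · intro w _
    have h1 : HasDerivAt (fun z : ℂ => ((1 + s * z) / c - s / c ^ 2) * Complex.exp (c * z))
        ((s * 1 / c) * Complex.exp (c * w) +
          ((1 + s * (w : ℂ)) / c - s / c ^ 2) * (Complex.exp (c * w) * (c * 1))) (w : ℂ) :=
      HasDerivAt.mul
        ((((hasDerivAt_id (w : ℂ)).const_mul s).const_add 1 |>.div_const c).sub_const _)
        ((hasDerivAt_id (w : ℂ)).const_mul c).cexp
    refine h1.comp_ofReal.congr_deriv ?_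
    field_simp
    ring
  · apply Continuous.intervalIntegrable
    fun_prop

lemma half_integral0 (a b : ℝ) (s : ℂ) :
    ∫ w in a..b, (1 + s * (w : ℂ)) * Complex.exp (0 * w) =
      (b + s * b ^ 2 / 2) - (a + s * a ^ 2 / 2) := by
  apply intervalIntegral.integral_eq_sub_of_hasDerivAt
    (f := fun w : ℝ => ((w : ℂ) + s * (w : ℂ) ^ 2 / 2))
  · intro w _
    have h1 : HasDerivAt (fun z : ℂ => (z + s * z ^ 2 / 2))
        (1 + s * (((2 : ℕ) : ℂ) * (w : ℂ) ^ (2 - 1)) / 2) (w : ℂ) :=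
      (hasDerivAt_id (w : ℂ)).add (((hasDerivAt_pow 2 (w : ℂ)).const_mul s).div_const 2)
    refine h1.comp_ofReal.congr_deriv ?_
    simp
    ring
  · apply Continuous.intervalIntegrable
    fun_prop

lemma tri_fejer (x : ℝ) :
    ∫ w : ℝ, (tri w : ℂ) * Complex.exp (-(2 * Real.pi * x * Complex.I) * w) = (Fejer x : ℂ) := by
  rw [tri_integral]
  have e : ∀ w : ℝ, (1 - 2 * (w : ℂ)) = 1 + (-2) * (w : ℂ) := fun w => by ring
  simp only [e]
  by_cases hx : x = 0
  · subst hx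
    simp only [Complex.ofReal_zero, mul_zero, zero_mul, neg_zero]
    have h1 := half_integral0 (-(1 / 2)) 0 2
    have h2 := half_integral0 0 (1 / 2) (-2)
    simp only [zero_mul] at h1 h2
    rw [h1, h2]
    simp [Fejer, sinc]
    norm_num
  · have hp : (Real.pi : ℂ) ≠ 0 := by exact_mod_cast Real.pi_ne_zero
    have hx' : (x : ℂ) ≠ 0 := by exact_mod_cast hx
    have hc : -(2 * Real.pi * x * Complex.I) ≠ 0 := by simp [hp, hx']
    rw [half_integral _ _ _ _ hc, half_integral _ _ _ _ hc]
    have hF : (Fejer x : ℂ) = (2 - 2 * Complex.cos (Real.pi * x)) / (2 * (Real.pi * x) ^ 2) := by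
      have h3 : Fejer x = (2 - 2 * Real.cos (Real.pi * x)) / (2 * (Real.pi * x) ^ 2) := by
        have h4 : Real.cos (Real.pi * x) = 1 - 2 * Real.sin (Real.pi * (x / 2)) ^ 2 := by
          rw [show Real.pi * x = 2 * (Real.pi * (x / 2)) by ring, Real.cos_two_mul, Real.cos_sq']
          ring
        rw [h4]
        have := Real.pi_ne_zero
        simp only [Fejer, sinc, div_eq_zero_iff, hx, OfNat.ofNat_ne_zero, or_self, if_false]
        field_simp
        ring
      rw [h3]
      push_cast
      rfl
    rw [hF, Complex.cos]
    have e1 : -(2 * Real.pi * x * Complex.I) * ((-(1 / 2) : ℝ) : ℂ) = Real.pi * x * Complex.I := by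
      push_cast; ring
    have e2 : -(2 * Real.pi * x * Complex.I) * ((1 / 2 : ℝ) : ℂ) = -(Real.pi * x) * Complex.I := by
      push_cast; ring
    rw [e1, e2]
    generalize Complex.exp (Real.pi * x * Complex.I) = A
    generalize Complex.exp (-(Real.pi * x) * Complex.I) = B
    push_cast
    simp only [mul_zero, Complex.exp_zero, neg_sq, mul_pow, Complex.I_sq]
    field_simp
    ring

lemma sinc_bounds (y : ℝ) : sinc y ^ 2 ≤ 1 ∧ (sinc y * (Real.pi * y)) ^ 2 ≤ 1 := by
  unfold sinc
  split_ifs with h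
  · simp [h]
  · have hp : Real.pi * y ≠ 0 := mul_ne_zero Real.pi_ne_zero h
    constructor
    · rw [div_pow, div_le_one (by positivity)]
      exact sq_le_sq.2 (Real.abs_sin_le_abs)
    · rw [div_mul_cancel₀ _ hp]
      exact Real.sin_sq_le_one _

lemma fejer_int : Integrable Fejer := by
  apply integrable_inv_one_add_sq.mono'
  · apply Measurable.aestronglyMeasurable
    have : Measurable sinc := by
      unfold sinc
      apply Measurable.ite (measurableSet_eq_fun measurable_id measurable_const) <;> fun_prop
    unfold Fejer
    fun_prop
  · refine Eventually.of_forall fun x => ?_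
    obtain ⟨h1, h2⟩ := sinc_bounds (x / 2)
    have h0 : 0 ≤ Fejer x := by unfold Fejer; positivity
    rw [Real.norm_of_nonneg h0, ← one_div, le_div_iff₀ (by positivity)]
    unfold Fejer
    have h9 : (9 : ℝ) ≤ Real.pi ^ 2 := by nlinarith [Real.pi_gt_three]
    have h3 : 9 * (sinc (x / 2) ^ 2 * (x / 2) ^ 2) ≤ 1 := by
      refine le_trans ?_ h2
      calc _ ≤ Real.pi ^ 2 * (sinc (x / 2) ^ 2 * (x / 2) ^ 2) := by gcongr
        _ = _ := by ring
    nlinarith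

open FourierTransform in
lemma tri_fourier : 𝓕 (fun w => (tri w : ℂ)) = fun x => (Fejer x : ℂ) := by
  funext x
  rw [← tri_fejer, Real.fourier_real_eq_integral_exp_smul]
  congr 1
  funext w
  rw [smul_eq_mul, mul_comm]
  congr 2
  push_cast
  ring

/-- The Fourier transform of the Fejér kernel is the triangle function:
`F̂(v) = 1 − |v/π|` for `|v| ≤ π` and `F̂(v) = 0` for `|v| > π`. -/
theorem statement14 (v : ℝ) :
    fourierT Fejer v =
      (((if |v| ≤ Real.pi then 1 - |v / Real.pi| else 0) : ℝ) : ℂ) := by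
  have hp := Real.pi_pos
  have key := Continuous.fourierInv_fourier_eq (f := fun w => (tri w : ℂ))
    (Complex.continuous_ofReal.comp tri_cont) tri_int
    (by rw [tri_fourier]; exact fejer_int.ofReal)
  have key2 := congrFun key (-(v / (2 * Real.pi)))
  rw [tri_fourier, Real.fourierInv_eq'] at key2
  have hT : tri (-(v / (2 * Real.pi))) = if |v| ≤ Real.pi then 1 - |v / Real.pi| else 0 := by
    unfold tri
    have e : 2 * |-(v / (2 * Real.pi))| = |v| / Real.pi := by
      rw [abs_neg, abs_div, abs_of_pos (by positivity : 0 < 2 * Real.pi)]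
      field_simp
    rw [e, abs_div, abs_of_pos hp]
    split_ifs with h
    · apply max_eq_right
      have := (div_le_one hp).2 h
      linarith
    · apply max_eq_left
      have := (one_le_div hp).2 (not_le.1 h).le
      linarith
  rw [← hT, ← key2]
  unfold fourierT
  congr 1
  funext u
  rw [smul_eq_mul, mul_comm]
  congr 2
  have hp' : (Real.pi : ℂ) ≠ 0 := by exact_mod_cast hp.ne'
  simp
  field_simp
end
end
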